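/- Let μ > −1 be real and set c̃ = (Γ((n−1)/2)/Γ(1/2)) · Γ((μ+1)/2) / Γ((μ+n−1)/2). Then for every measurable φ : S^{n-1} → [0,∞], ∫_{S^{n-1}} (Fφ)(w) · |w_n|^{μ} (1 − w_n²)^{(1−μ−n)/2} d*w = c̃ · ∫_{S^{n-1}} φ(θ) (1 − θ_n²)^{μ/2} |θ_n|^{−1−μ} d*θ, the equality holding in [0,∞]. (Case k = n−1, p = 1 of the paper's explicit weighted identity for the Funk-type transform F_k.) -/

import Mathlib

open MeasureTheory Metric Real
open scoped ENNReal NNReal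

noncomputable section

/-- The normalized (probability) surface measure `d*θ` on the unit sphere of
`EuclideanSpace ℝ (Fin n)`. -/
def sphMeasure (n : ℕ) : Measure (sphere (0 : EuclideanSpace ℝ (Fin n)) 1) :=
  ((volume : Measure (EuclideanSpace ℝ (Fin n))).toSphere Set.univ)⁻¹ •
    (volume : Measure (EuclideanSpace ℝ (Fin n))).toSphere

/-- The hyperplane Radon transform: `Rf(θ,t) = ∫_{θ^⊥} f(tθ + y) dy`, where `θ^⊥` carries its
canonical Lebesgue measure as an (n-1)-dimensional inner product space. -/
def Radon (n : ℕ) (f : EuclideanSpace ℝ (Fin n) → ℝ≥0∞)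
    (θ : sphere (0 : EuclideanSpace ℝ (Fin n)) 1) (t : ℝ) : ℝ≥0∞ :=
  ∫⁻ y : ((ℝ ∙ (θ : EuclideanSpace ℝ (Fin n)))ᗮ),
    f (t • (θ : EuclideanSpace ℝ (Fin n)) + (y : EuclideanSpace ℝ (Fin n)))

/-- The codimension-one Funk transform: the average of `φ` over the great subsphere
`S^{n-1} ∩ w^⊥` (the unit sphere of the subspace `w^⊥`, with its normalized surface
measure). -/
def Funk (n : ℕ) (φ : sphere (0 : EuclideanSpace ℝ (Fin n)) 1 → ℝ≥0∞)
    (w : sphere (0 : EuclideanSpace ℝ (Fin n)) 1) : ℝ≥0∞ :=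
  ((volume : Measure ((ℝ ∙ (w : EuclideanSpace ℝ (Fin n)))ᗮ)).toSphere Set.univ)⁻¹ *
    ∫⁻ v : sphere (0 : ((ℝ ∙ (w : EuclideanSpace ℝ (Fin n)))ᗮ)) 1,
      φ ⟨((v : ((ℝ ∙ (w : EuclideanSpace ℝ (Fin n)))ᗮ)) : EuclideanSpace ℝ (Fin n)), by
          have hv := v.2
          simp only [mem_sphere_iff_norm, sub_zero] at hv ⊢
          rwa [Submodule.coe_norm] at hv⟩
      ∂((volume : Measure ((ℝ ∙ (w : EuclideanSpace ℝ (Fin n)))ᗮ)).toSphere)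

/-!
The Funk transform is self-adjoint: for orthonormal `u`, `v`, averaging `ψ (g⁻¹ v) φ (g⁻¹ u)` over
the orthogonal group gives `∫ ψ · Fφ`, and the pair can be interchanged. So it suffices to compute
the Funk transform of the weight `|⟪e, w⟫| ^ μ (1 - ⟪e, w⟫²) ^ ((1 - μ - n) / 2)`. On the great
subsphere orthogonal to `θ` only the projection `v` of `e` onto `θᗮ` matters, and the resulting
spherical average comes from evaluating `∫ exp (-‖x‖²) |⟪v, x⟫| ^ μ exp (⟪v, x⟫²) dx` over `θᗮ` in
two ways: in polar coordinates, and by splitting off the direction of `v`.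
-/

section SphereMap

variable {V W : Type*} [NormedAddCommGroup V] [InnerProductSpace ℝ V]
  [NormedAddCommGroup W] [InnerProductSpace ℝ W]

/-- The map between unit spheres induced by a linear isometry. -/
def sphereMap (g : V →ₗᵢ[ℝ] W) (x : sphere (0 : V) 1) : sphere (0 : W) 1 :=
  ⟨g x, by simp⟩

@[simp]
lemma coe_sphereMap (g : V →ₗᵢ[ℝ] W) (x : sphere (0 : V) 1) : (sphereMap g x : W) = g x := rfl

lemma continuous_sphereMap (g : V →ₗᵢ[ℝ] W) : Continuous (sphereMap g) :=
  (g.continuous.comp continuous_subtype_val).subtype_mk _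

variable [MeasurableSpace V] [BorelSpace V] [MeasurableSpace W] [BorelSpace W]

@[fun_prop]
lemma measurable_sphereMap (g : V →ₗᵢ[ℝ] W) : Measurable (sphereMap g) :=
  (continuous_sphereMap g).measurable

end SphereMap

section UnitVectors

variable {V : Type*} [NormedAddCommGroup V] [InnerProductSpace ℝ V]

lemma exists_unit_norm_smul_eq [Nontrivial V] (v : V) :
    ∃ u : sphere (0 : V) 1, ‖v‖ • (u : V) = v := by
  rcases eq_or_ne v 0 with rfl | hv
  · obtain ⟨u, hu⟩ := (NormedSpace.sphere_nonempty (x := (0 : V))).mpr zero_le_one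
    exact ⟨⟨u, hu⟩, by simp⟩
  · exact ⟨⟨‖v‖⁻¹ • v, by simp [norm_smul, hv]⟩, smul_inv_smul₀ (norm_ne_zero_iff.mpr hv) v⟩

lemma norm_orthogonalProjectionOnto_orthogonal_span_unit_sq (e w : sphere (0 : V) 1) :
    ‖(ℝ ∙ (w : V))ᗮ.orthogonalProjectionOnto (e : V)‖ ^ 2 = 1 - inner ℝ (e : V) w ^ 2 := by
  have pythagoras := Submodule.norm_sq_eq_add_norm_sq_projection (e : V) (ℝ ∙ (w : V))
  have norm_projection :
      ‖(ℝ ∙ (w : V)).orthogonalProjectionOnto (e : V)‖ = |inner ℝ (e : V) w| := by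
    rw [Submodule.coe_norm, Submodule.coe_orthogonalProjectionOnto_apply,
      Submodule.starProjection_unit_singleton ℝ (by simp), norm_smul, real_inner_comm]
    simp
  rw [norm_projection, sq_abs, norm_eq_of_mem_sphere, one_pow] at pythagoras
  linarith

variable [FiniteDimensional ℝ V]

lemma finrank_orthogonal_span_unit (w : sphere (0 : V) 1) :
    Module.finrank ℝ (ℝ ∙ (w : V))ᗮ + 1 = Module.finrank ℝ V := by
  rw [← (ℝ ∙ (w : V)).finrank_add_finrank_orthogonal,
    finrank_span_singleton (ne_zero_of_mem_unit_sphere w), add_comm]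

lemma exists_unit_inner_eq_zero (hV : 2 ≤ Module.finrank ℝ V) :
    ∃ u v : sphere (0 : V) 1, inner ℝ (u : V) v = 0 := by
  have : Nontrivial V := Module.nontrivial_of_finrank_pos (R := ℝ) (by omega)
  obtain ⟨v, hv⟩ := (NormedSpace.sphere_nonempty (x := (0 : V))).mpr zero_le_one
  have h_finrank := finrank_orthogonal_span_unit ⟨v, hv⟩
  have : Nontrivial (ℝ ∙ v)ᗮ := Module.nontrivial_of_finrank_pos (R := ℝ) (by grind)
  obtain ⟨u, hu⟩ := (NormedSpace.sphere_nonempty (x := (0 : (ℝ ∙ v)ᗮ))).mpr zero_le_one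
  exact ⟨sphereMap (Submodule.subtypeₗᵢ _) ⟨u, hu⟩, ⟨v, hv⟩,
    Submodule.mem_orthogonal_singleton_iff_inner_left.mp u.2⟩

end UnitVectors

section UnitSphereMeasure

/-- The normalized surface measure on the unit sphere of `V`. It is a probability measure unless
`V` is trivial. -/
def unitSphereMeasure (V : Type*) [NormedAddCommGroup V] [InnerProductSpace ℝ V]
    [FiniteDimensional ℝ V] [MeasurableSpace V] [BorelSpace V] : Measure (sphere (0 : V) 1) :=
  ((volume : Measure V).toSphere Set.univ)⁻¹ • (volume : Measure V).toSphere

variable {V W : Type*} [NormedAddCommGroup V] [InnerProductSpace ℝ V] [FiniteDimensional ℝ V]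
  [MeasurableSpace V] [BorelSpace V]

instance [Nontrivial V] : IsProbabilityMeasure (unitSphereMeasure V) :=
  have : NeZero (volume : Measure V).toSphere := ⟨Measure.toSphere_ne_zero _⟩
  isProbabilityMeasureSMul

instance : SFinite (unitSphereMeasure V) := by
  unfold unitSphereMeasure; infer_instance

lemma lintegral_unitSphereMeasure (φ : sphere (0 : V) 1 → ℝ≥0∞) :
    ∫⁻ x, φ x ∂unitSphereMeasure V =
      ((volume : Measure V).toSphere Set.univ)⁻¹ * ∫⁻ x, φ x ∂(volume : Measure V).toSphere :=
  lintegral_smul_measure _ _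

variable [NormedAddCommGroup W] [InnerProductSpace ℝ W] [FiniteDimensional ℝ W]
  [MeasurableSpace W] [BorelSpace W]

open scoped Pointwise in
lemma measurePreserving_sphereMap_toSphere (g : V ≃ₗᵢ[ℝ] W) :
    MeasurePreserving (sphereMap g.toLinearIsometry) (volume : Measure V).toSphere
      (volume : Measure W).toSphere := by
  refine ⟨measurable_sphereMap _, Measure.ext fun s hs => ?_⟩
  have cone_eq : Set.Ioo (0 : ℝ) 1 • ((↑) '' (sphereMap g.toLinearIsometry ⁻¹' s) : Set V) =
      g ⁻¹' (Set.Ioo (0 : ℝ) 1 • ((↑) '' s : Set W)) := by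
    ext x
    constructor
    · rintro ⟨r, hr, _, ⟨w, hw, rfl⟩, rfl⟩
      exact ⟨r, hr, g w, ⟨_, hw, rfl⟩, (g.map_smul r w).symm⟩
    · rintro ⟨r, hr, _, ⟨w, hw, rfl⟩, hx⟩
      have hw' : sphereMap g.toLinearIsometry (sphereMap g.symm.toLinearIsometry w) = w :=
        Subtype.ext (g.apply_symm_apply w)
      refine ⟨r, hr, g.symm w, ⟨sphereMap g.symm.toLinearIsometry w, ?_, rfl⟩, ?_⟩
      · rwa [Set.mem_preimage, hw']
      · exact g.injective (by simpa using hx)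
  rw [Measure.map_apply (measurable_sphereMap _) hs, Measure.toSphere_apply' _ hs,
    Measure.toSphere_apply' _ (measurable_sphereMap _ hs), cone_eq,
    g.measurePreserving.measure_preimage_emb g.toHomeomorph.measurableEmbedding,
    g.toLinearEquiv.finrank_eq]

lemma measurePreserving_sphereMap (g : V ≃ₗᵢ[ℝ] W) :
    MeasurePreserving (sphereMap g.toLinearIsometry) (unitSphereMeasure V)
      (unitSphereMeasure W) := by
  have h := measurePreserving_sphereMap_toSphere g
  have h_univ : (volume : Measure V).toSphere Set.univ = (volume : Measure W).toSphere Set.univ :=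
    h.measure_preimage MeasurableSet.univ.nullMeasurableSet
  rw [unitSphereMeasure, h_univ]
  exact h.smul_measure _

end UnitSphereMeasure

section FunkTransform

variable {V : Type*} [NormedAddCommGroup V] [InnerProductSpace ℝ V] [FiniteDimensional ℝ V]
  [MeasurableSpace V] [BorelSpace V]

/-- The average of a function on the unit sphere of `V` over the unit sphere of a subspace. -/
def sphereAverage (K : Submodule ℝ V) (φ : sphere (0 : V) 1 → ℝ≥0∞) : ℝ≥0∞ :=
  ∫⁻ x, φ (sphereMap K.subtypeₗᵢ x) ∂unitSphereMeasure K

/-- The codimension-one Funk transform on the unit sphere of `V`: the average over the great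
subsphere orthogonal to a given point. -/
def funkTransform (φ : sphere (0 : V) 1 → ℝ≥0∞) (w : sphere (0 : V) 1) : ℝ≥0∞ :=
  sphereAverage (ℝ ∙ (w : V))ᗮ φ

lemma sphereAverage_map (g : V ≃ₗᵢ[ℝ] V) (K : Submodule ℝ V) {φ : sphere (0 : V) 1 → ℝ≥0∞}
    (hφ : Measurable φ) :
    sphereAverage (K.map (g.toLinearEquiv : V →ₗ[ℝ] V)) φ =
      sphereAverage K (φ ∘ sphereMap g.toLinearIsometry) :=
  ((measurePreserving_sphereMap (g.submoduleMap K)).lintegral_comp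
    (hφ.comp (measurable_sphereMap _))).symm

lemma funkTransform_sphereMap (g : V ≃ₗᵢ[ℝ] V) {φ : sphere (0 : V) 1 → ℝ≥0∞}
    (hφ : Measurable φ) (w : sphere (0 : V) 1) :
    funkTransform φ (sphereMap g.toLinearIsometry w) =
      funkTransform (φ ∘ sphereMap g.toLinearIsometry) w := by
  rw [funkTransform, funkTransform, ← sphereAverage_map g _ hφ, Submodule.map_orthogonal_equiv,
    Submodule.map_span, Set.image_singleton]
  rfl

end FunkTransform

section OrthogonalGroup

variable {V : Type*} [NormedAddCommGroup V] [InnerProductSpace ℝ V] [FiniteDimensional ℝ V]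

/-- The action of the orthogonal group of `V` on the unit sphere. -/
instance : MulAction (unitary (V →L[ℝ] V)) (sphere (0 : V) 1) where
  smul g := sphereMap (Unitary.linearIsometryEquiv g).toLinearIsometry
  one_smul _ := rfl
  mul_smul _ _ _ := rfl

lemma unitary_smul_eq_sphereMap (g : unitary (V →L[ℝ] V)) (x : sphere (0 : V) 1) :
    g • x = sphereMap (Unitary.linearIsometryEquiv g).toLinearIsometry x := rfl

instance : ContinuousSMul (unitary (V →L[ℝ] V)) (sphere (0 : V) 1) where
  continuous_smul := by
    refine Continuous.subtype_mk ?_ _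
    exact (continuous_subtype_val.comp continuous_fst).clm_apply
      (continuous_subtype_val.comp continuous_snd)

instance : CompactSpace (unitary (V →L[ℝ] V)) :=
  isCompact_iff_compactSpace.mp <| isCompact_of_isClosed_isBounded isClosed_unitary <|
    isBounded_iff_forall_norm_le.mpr ⟨1, fun _ hg =>
      ContinuousLinearMap.opNorm_le_bound _ zero_le_one fun x => by
        rw [one_mul, ContinuousLinearMap.norm_map_of_mem_unitary hg]⟩

lemma exists_unitary_smul_eq_and_smul_eq_self (x y : sphere (0 : V) 1) :
    ∃ g : unitary (V →L[ℝ] V), g • x = y ∧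
      ∀ z : sphere (0 : V) 1, inner ℝ (x - y : V) z = 0 → g • z = z := by
  refine ⟨Unitary.linearIsometryEquiv.symm (ℝ ∙ (x - y : V))ᗮ.reflection, Subtype.ext ?_,
    fun z hz => Subtype.ext ?_⟩
  · exact Submodule.reflection_sub (by simp)
  · exact Submodule.reflection_mem_subspace_eq_self
      (Submodule.mem_orthogonal_singleton_iff_inner_right.mpr hz)

instance : MulAction.IsPretransitive (unitary (V →L[ℝ] V)) (sphere (0 : V) 1) where
  exists_smul_eq x y := (exists_unitary_smul_eq_and_smul_eq_self x y).imp fun _ h => h.1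

variable [MeasurableSpace V] [BorelSpace V]

instance : SMulInvariantMeasure (unitary (V →L[ℝ] V)) (sphere (0 : V) 1)
    (unitSphereMeasure V) where
  measure_preimage_smul g _ hs :=
    (measurePreserving_sphereMap (Unitary.linearIsometryEquiv g)).measure_preimage
      hs.nullMeasurableSet

end OrthogonalGroup

lemma lintegral_inv_smul_eq {G X : Type*} [Group G] [MeasurableSpace G] [MeasurableMul G]
    [MeasurableInv G] [MeasurableSpace X] [MulAction G X] [MeasurableSMul₂ G X]
    [MulAction.IsPretransitive G X]
    (ν : Measure G) [IsProbabilityMeasure ν] [ν.IsMulLeftInvariant]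
    (σ : Measure X) [IsProbabilityMeasure σ] [SMulInvariantMeasure G X σ]
    {f : X → ℝ≥0∞} (hf : Measurable f) (x : X) :
    ∫⁻ g : G, f (g⁻¹ • x) ∂ν = ∫⁻ y, f y ∂σ := by
  have independent_of_point (y : X) : ∫⁻ g : G, f (g⁻¹ • y) ∂ν = ∫⁻ g : G, f (g⁻¹ • x) ∂ν := by
    obtain ⟨h, rfl⟩ := MulAction.exists_smul_eq G x y
    rw [← lintegral_mul_left_eq_self _ h]
    simp only [mul_inv_rev, mul_smul, inv_smul_smul]
  calc ∫⁻ g : G, f (g⁻¹ • x) ∂ν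
      = ∫⁻ y, ∫⁻ g : G, f (g⁻¹ • y) ∂ν ∂σ := by
        simp only [independent_of_point, lintegral_const, measure_univ, mul_one]
    _ = ∫⁻ g : G, ∫⁻ y, f (g⁻¹ • y) ∂σ ∂ν := lintegral_lintegral_swap (by fun_prop)
    _ = ∫⁻ y, f y ∂σ := by
        simp only [(measurePreserving_smul _ σ).lintegral_comp hf, lintegral_const, measure_univ,
          mul_one]

section Duality

variable {V : Type*} [NormedAddCommGroup V] [InnerProductSpace ℝ V] [FiniteDimensional ℝ V]

/-- The Haar probability measure on the orthogonal group of `V`. -/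
def orthogonalHaar (V : Type*) [NormedAddCommGroup V] [InnerProductSpace ℝ V]
    [FiniteDimensional ℝ V] : Measure (unitary (V →L[ℝ] V)) :=
  ((Measure.haar : Measure (unitary (V →L[ℝ] V))) Set.univ)⁻¹ • Measure.haar

instance : IsProbabilityMeasure (orthogonalHaar V) := isProbabilityMeasureSMul

instance : (orthogonalHaar V).IsMulLeftInvariant := by
  unfold orthogonalHaar; infer_instance

variable [MeasurableSpace V] [BorelSpace V]

/- The domain of integration in `funkTransform φ w` varies with `w`; a reflection depending
measurably on `w` moves it to a fixed one. -/
lemma measurable_funkTransform {φ : sphere (0 : V) 1 → ℝ≥0∞} (hφ : Measurable φ) :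
    Measurable (funkTransform φ) := by
  rcases isEmpty_or_nonempty (sphere (0 : V) 1) with _ | ⟨⟨v⟩⟩
  · exact measurable_of_empty _
  let reflectionTo (w : sphere (0 : V) 1) : V ≃ₗᵢ[ℝ] V := (ℝ ∙ (v - w : V))ᗮ.reflection
  have map_eq (w : sphere (0 : V) 1) : sphereMap (reflectionTo w).toLinearIsometry v = w :=
    Subtype.ext (Submodule.reflection_sub (by simp))
  have funk_eq (w : sphere (0 : V) 1) :
      funkTransform φ w = funkTransform (φ ∘ sphereMap (reflectionTo w).toLinearIsometry) v := by
    rw [← funkTransform_sphereMap _ hφ, map_eq]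
  have measurable_map : Measurable fun p : sphere (0 : V) 1 × sphere (0 : V) 1 =>
      sphereMap (reflectionTo p.1).toLinearIsometry p.2 := by
    refine Measurable.subtype_mk ?_
    simp only [reflectionTo, LinearIsometryEquiv.coe_toLinearIsometry,
      Submodule.reflection_orthogonal_apply, Submodule.reflection_singleton_apply, two_smul,
      RCLike.ofReal_real_eq_id, id_eq]
    fun_prop
  simp only [funext funk_eq, funkTransform, sphereAverage]
  exact (hφ.comp (measurable_map.comp
    (measurable_fst.prodMk ((measurable_sphereMap _).comp measurable_snd)))).lintegral_prod_right'

theorem lintegral_orthogonalHaar_mul {φ ψ : sphere (0 : V) 1 → ℝ≥0∞} (hφ : Measurable φ)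
    (hψ : Measurable ψ) {u v : sphere (0 : V) 1} (huv : inner ℝ (u : V) v = 0) :
    ∫⁻ g, ψ (g⁻¹ • v) * φ (g⁻¹ • u) ∂orthogonalHaar V =
      ∫⁻ w, ψ w * funkTransform φ w ∂unitSphereMeasure V := by
  set K := (ℝ ∙ (v : V))ᗮ
  have u_mem : (u : V) ∈ K := by
    rwa [Submodule.mem_orthogonal_singleton_iff_inner_left]
  have : Nontrivial K := ⟨⟨u, u_mem⟩, 0, fun h =>
    ne_zero_of_mem_unit_sphere u (congrArg Subtype.val h)⟩
  have : Nontrivial V := K.subtype_injective.nontrivial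
  have independent_of_point (x : sphere (0 : K) 1) :
      ∫⁻ g : unitary (V →L[ℝ] V), ψ (g⁻¹ • v) * φ (g⁻¹ • sphereMap K.subtypeₗᵢ x)
        ∂orthogonalHaar V = ∫⁻ g, ψ (g⁻¹ • v) * φ (g⁻¹ • u) ∂orthogonalHaar V := by
    obtain ⟨h, hx, h_fix⟩ := exists_unitary_smul_eq_and_smul_eq_self u (sphereMap K.subtypeₗᵢ x)
    have hv : h • v = v := h_fix v <| Submodule.mem_orthogonal_singleton_iff_inner_left.mp <|
      K.sub_mem u_mem x.1.2
    rw [← lintegral_mul_left_eq_self _ h]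
    simp only [mul_inv_rev, mul_smul, ← hx, inv_smul_smul, inv_smul_eq_iff.mpr hv.symm]
  have average_over_K (g : unitary (V →L[ℝ] V)) :
      ∫⁻ x, ψ (g • v) * φ (g • sphereMap K.subtypeₗᵢ x) ∂unitSphereMeasure K =
        ψ (g • v) * funkTransform φ (g • v) := by
    rw [unitary_smul_eq_sphereMap g v, funkTransform_sphereMap _ hφ,
      lintegral_const_mul _ (by simp only [unitary_smul_eq_sphereMap]; fun_prop)]
    rfl
  calc ∫⁻ g, ψ (g⁻¹ • v) * φ (g⁻¹ • u) ∂orthogonalHaar V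
      = ∫⁻ x, ∫⁻ g : unitary (V →L[ℝ] V), ψ (g⁻¹ • v) * φ (g⁻¹ • sphereMap K.subtypeₗᵢ x)
          ∂orthogonalHaar V ∂unitSphereMeasure K := by
        simp only [independent_of_point, lintegral_const, measure_univ, mul_one]
    _ = ∫⁻ g : unitary (V →L[ℝ] V), ψ (g⁻¹ • v) * funkTransform φ (g⁻¹ • v)
          ∂orthogonalHaar V := by
        rw [lintegral_lintegral_swap (by fun_prop)]
        simp only [average_over_K]
    _ = ∫⁻ w, ψ w * funkTransform φ w ∂unitSphereMeasure V :=
        lintegral_inv_smul_eq (f := fun w => ψ w * funkTransform φ w) _ _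
          (hψ.mul (measurable_funkTransform hφ)) v

theorem lintegral_mul_funkTransform_comm (hV : 2 ≤ Module.finrank ℝ V)
    {φ ψ : sphere (0 : V) 1 → ℝ≥0∞} (hφ : Measurable φ) (hψ : Measurable ψ) :
    ∫⁻ w, ψ w * funkTransform φ w ∂unitSphereMeasure V =
      ∫⁻ w, φ w * funkTransform ψ w ∂unitSphereMeasure V := by
  obtain ⟨u, v, hu⟩ := exists_unit_inner_eq_zero hV
  rw [← lintegral_orthogonalHaar_mul hφ hψ hu,
    ← lintegral_orthogonalHaar_mul hψ hφ (by rwa [real_inner_comm])]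
  simp only [mul_comm]

end Duality

section GaussianIntegrals

lemma lintegral_comp_abs (f : ℝ → ℝ≥0∞) : ∫⁻ t, f |t| = 2 * ∫⁻ t in Set.Ioi 0, f t := by
  have right : ∫⁻ t in Set.Ioi (0 : ℝ), f |t| = ∫⁻ t in Set.Ioi 0, f t :=
    setLIntegral_congr_fun measurableSet_Ioi fun t ht => by rw [abs_of_pos ht]
  have left : ∫⁻ t in Set.Iic (0 : ℝ), f |t| = ∫⁻ t in Set.Ioi 0, f t := by
    rw [← right, setLIntegral_congr Iio_ae_eq_Iic.symm,
      ← (Measure.measurePreserving_neg (volume : Measure ℝ)).setLIntegral_comp_preimage_emb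
        (MeasurableEquiv.neg ℝ).measurableEmbedding]
    simp
  rw [← lintegral_add_compl _ measurableSet_Ioi, Set.compl_Ioi, right, left, two_mul]

lemma lintegral_Ioi_rpow (q : ℝ) : ∫⁻ r in Set.Ioi (0 : ℝ), ENNReal.ofReal (r ^ q) = ∞ := by
  by_contra h
  refine not_integrableOn_Ioi_rpow q ⟨by fun_prop, ?_⟩
  rwa [hasFiniteIntegral_iff_ofReal, lt_top_iff_ne_top]
  filter_upwards [ae_restrict_mem measurableSet_Ioi] with r hr using rpow_nonneg hr.le q

/- For `b ≤ 0` both sides are `∞`, because `0 ^ p = ∞` for `p < 0` in `ℝ≥0∞`. -/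
lemma lintegral_Ioi_rpow_mul_exp_neg_mul_sq {q : ℝ} (hq : -1 < q) (b : ℝ) :
    ∫⁻ r in Set.Ioi (0 : ℝ), ENNReal.ofReal r ^ q * ENNReal.ofReal (exp (-b * r ^ 2)) =
      ENNReal.ofReal (Gamma ((q + 1) / 2) / 2) * ENNReal.ofReal b ^ (-(q + 1) / 2) := by
  have hΓ : 0 < Gamma ((q + 1) / 2) := Gamma_pos_of_pos (by linarith)
  have integrand_eq : ∀ r ∈ Set.Ioi (0 : ℝ),
      ENNReal.ofReal r ^ q * ENNReal.ofReal (exp (-b * r ^ 2)) =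
        ENNReal.ofReal (r ^ q * exp (-b * r ^ 2)) := fun r hr => by
    rw [ENNReal.ofReal_rpow_of_pos hr, ENNReal.ofReal_mul (rpow_nonneg hr.le q)]
  rw [setLIntegral_congr_fun measurableSet_Ioi integrand_eq]
  rcases le_or_gt b 0 with hb | hb
  · rw [ENNReal.ofReal_of_nonpos hb, ENNReal.zero_rpow_of_neg (by linarith),
      ENNReal.mul_top (by simpa using hΓ), ← top_le_iff, ← lintegral_Ioi_rpow q]
    refine setLIntegral_mono' measurableSet_Ioi fun r hr => ENNReal.ofReal_le_ofReal ?_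
    refine le_mul_of_one_le_right (rpow_nonneg hr.le q) (one_le_exp ?_)
    exact mul_nonneg (neg_nonneg.mpr hb) (sq_nonneg r)
  · have h_integral := integral_rpow_mul_exp_neg_mul_rpow two_pos hq hb
    simp only [rpow_two] at h_integral
    rw [← ofReal_integral_eq_lintegral_ofReal (integrableOn_rpow_mul_exp_neg_mul_sq hb hq),
      h_integral, ENNReal.ofReal_rpow_of_pos hb, ← ENNReal.ofReal_mul (by positivity)]
    · congr 1
      ring
    · filter_upwards [ae_restrict_mem measurableSet_Ioi] with r hr
      exact mul_nonneg (rpow_nonneg hr.le q) (exp_pos _).le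

lemma lintegral_abs_rpow_mul_exp_neg_mul_sq {q : ℝ} (hq : -1 < q) (b : ℝ) :
    ∫⁻ t : ℝ, ENNReal.ofReal |t| ^ q * ENNReal.ofReal (exp (-b * t ^ 2)) =
      ENNReal.ofReal (Gamma ((q + 1) / 2)) * ENNReal.ofReal b ^ (-(q + 1) / 2) := by
  have h := lintegral_comp_abs fun t => ENNReal.ofReal t ^ q * ENNReal.ofReal (exp (-b * t ^ 2))
  simp only [sq_abs] at h
  rw [h, lintegral_Ioi_rpow_mul_exp_neg_mul_sq hq, ← mul_assoc, ← ENNReal.ofReal_ofNat 2,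
    ← ENNReal.ofReal_mul zero_le_two, mul_div_cancel₀ _ two_ne_zero]

variable {V : Type*} [NormedAddCommGroup V] [InnerProductSpace ℝ V] [FiniteDimensional ℝ V]
  [MeasurableSpace V] [BorelSpace V]

lemma lintegral_polar [Nontrivial V] {f : V → ℝ≥0∞} (hf : Measurable f) :
    ∫⁻ x, f x = ∫⁻ w : sphere (0 : V) 1, ∫⁻ r in Set.Ioi (0 : ℝ),
      ENNReal.ofReal (r ^ (Module.finrank ℝ V - 1)) * f (r • (w : V))
        ∂volume ∂(volume : Measure V).toSphere := by
  have polar_apply (x : ({0}ᶜ : Set V)) :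
      (homeomorphUnitSphereProd V x).2.1 • (homeomorphUnitSphereProd V x).1.1 = x.1 := by
    simp only [homeomorphUnitSphereProd_apply_snd_coe, homeomorphUnitSphereProd_apply_fst_coe]
    rw [smul_inv_smul₀ (norm_ne_zero_iff.mpr x.2)]
  have h_polar := (volume : Measure V).measurePreserving_homeomorphUnitSphereProd.lintegral_comp
    (f := fun z => f (z.2.1 • z.1.1)) (by fun_prop)
  simp only [polar_apply] at h_polar
  have h_compl : ∫⁻ x : ({0}ᶜ : Set V), f x ∂(volume : Measure V).comap (↑) = ∫⁻ x, f x := by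
    rw [lintegral_subtype_comap (measurableSet_singleton _).compl, restrict_compl_singleton]
  rw [← h_compl, h_polar, lintegral_prod _ (by fun_prop)]
  refine lintegral_congr fun w => ?_
  rw [Measure.volumeIoiPow, lintegral_withDensity_eq_lintegral_mul _ (by fun_prop) (by fun_prop),
    ← lintegral_subtype_comap measurableSet_Ioi]
  rfl

lemma measurePreserving_smul_add_orthogonal {u : V} (hu : ‖u‖ = 1) :
    MeasurePreserving (fun p : ℝ × (ℝ ∙ u)ᗮ => p.1 • u + (p.2 : V)) :=
  (ℝ ∙ u).orthogonalDecomposition.symm.measurePreserving.comp <|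
    (WithLp.volume_preserving_toLp _ _).comp <|
      (LinearIsometryEquiv.toSpanUnitSingleton u hu).measurePreserving.prod (.id volume)

variable (V) in
lemma lintegral_exp_neg_norm_sq :
    ∫⁻ x : V, ENNReal.ofReal (exp (-‖x‖ ^ 2)) = ENNReal.ofReal √π ^ Module.finrank ℝ V := by
  have h_integral := GaussianFourier.integral_rexp_neg_mul_sq_norm (V := V) one_pos
  simp only [neg_mul, one_mul, div_one] at h_integral
  rw [← ofReal_integral_eq_lintegral_ofReal, h_integral, ← ENNReal.ofReal_pow (sqrt_nonneg _),
    sqrt_eq_rpow, ← rpow_natCast, ← rpow_mul pi_pos.le, one_div_mul_eq_div]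
  · refine .of_integral_ne_zero ?_
    rw [h_integral]
    positivity
  · exact .of_forall fun x => (exp_pos _).le

lemma lintegral_exp_neg_norm_sq_mul_inner_unit (u : sphere (0 : V) 1) {g : ℝ → ℝ≥0∞}
    (hg : Measurable g) :
    ∫⁻ x : V, ENNReal.ofReal (exp (-‖x‖ ^ 2)) * g (inner ℝ (u : V) x) =
      ENNReal.ofReal √π ^ (Module.finrank ℝ V - 1) *
        ∫⁻ t : ℝ, ENNReal.ofReal (exp (-t ^ 2)) * g t := by
  have hu : ‖(u : V)‖ = 1 := by simp
  have inner_eq_zero (y : (ℝ ∙ (u : V))ᗮ) : inner ℝ (u : V) y = 0 :=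
    Submodule.mem_orthogonal_singleton_iff_inner_right.mp y.2
  have inner_eq (t : ℝ) (y : (ℝ ∙ (u : V))ᗮ) : inner ℝ (u : V) (t • (u : V) + y) = t := by
    simp [inner_add_right, inner_smul_right, inner_eq_zero]
  have norm_sq_eq (t : ℝ) (y : (ℝ ∙ (u : V))ᗮ) : ‖t • (u : V) + y‖ ^ 2 = t ^ 2 + ‖y‖ ^ 2 := by
    rw [norm_add_sq_real, inner_smul_left, inner_eq_zero, norm_smul, hu]
    simp
  have h_finrank := finrank_orthogonal_span_unit u
  rw [← (measurePreserving_smul_add_orthogonal hu).lintegral_comp (by fun_prop)]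
  simp only [inner_eq, norm_sq_eq, neg_add, exp_add, ENNReal.ofReal_mul (exp_pos _).le,
    mul_right_comm _ (ENNReal.ofReal (exp (-‖_‖ ^ 2)))]
  rw [← h_finrank, Nat.add_sub_cancel, ← lintegral_exp_neg_norm_sq, mul_comm]
  exact lintegral_prod_mul (f := fun t : ℝ => ENNReal.ofReal (exp (-t ^ 2)) * g t)
    (g := fun y : (ℝ ∙ (u : V))ᗮ => ENNReal.ofReal (exp (-‖y‖ ^ 2))) (by fun_prop) (by fun_prop)

lemma lintegral_exp_neg_norm_sq_mul_inner [Nontrivial V] (v : V) {g : ℝ → ℝ≥0∞}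
    (hg : Measurable g) :
    ∫⁻ x : V, ENNReal.ofReal (exp (-‖x‖ ^ 2)) * g (inner ℝ v x) =
      ENNReal.ofReal √π ^ (Module.finrank ℝ V - 1) *
        ∫⁻ t : ℝ, ENNReal.ofReal (exp (-t ^ 2)) * g (‖v‖ * t) := by
  obtain ⟨u, hu⟩ := exists_unit_norm_smul_eq v
  have inner_eq (x : V) : inner ℝ v x = ‖v‖ * inner ℝ (u : V) x := by
    rw [← real_inner_smul_left, hu]
  simp only [inner_eq]
  exact lintegral_exp_neg_norm_sq_mul_inner_unit u (g := fun t => g (‖v‖ * t)) (by fun_prop)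

lemma exp_neg_sq_mul_abs_rpow_mul_exp_sq (a t μ : ℝ) :
    ENNReal.ofReal (exp (-t ^ 2)) *
        (ENNReal.ofReal |a * t| ^ μ * ENNReal.ofReal (exp ((a * t) ^ 2))) =
      ENNReal.ofReal |a| ^ μ *
        (ENNReal.ofReal |t| ^ μ * ENNReal.ofReal (exp (-(1 - a ^ 2) * t ^ 2))) := by
  have exp_eq : exp (-(1 - a ^ 2) * t ^ 2) = exp (-t ^ 2) * exp ((a * t) ^ 2) := by
    rw [← exp_add]
    ring_nf
  rw [exp_eq, abs_mul, ENNReal.ofReal_mul (abs_nonneg a), ENNReal.ofReal_mul (exp_pos _).le,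
    ENNReal.mul_rpow_of_ne_top ENNReal.ofReal_ne_top ENNReal.ofReal_ne_top]
  ring

lemma lintegral_exp_inner_sq_eq_lintegral_sphere [Nontrivial V] {μ : ℝ} (hμ : -1 < μ) (v : V) :
    ∫⁻ x : V, ENNReal.ofReal (exp (-‖x‖ ^ 2)) *
        (ENNReal.ofReal |inner ℝ v x| ^ μ * ENNReal.ofReal (exp (inner ℝ v x ^ 2))) =
      ENNReal.ofReal (Gamma ((μ + Module.finrank ℝ V) / 2) / 2) *
        ∫⁻ w : sphere (0 : V) 1, ENNReal.ofReal |inner ℝ v w| ^ μ *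
          ENNReal.ofReal (1 - inner ℝ v w ^ 2) ^ (-(μ + Module.finrank ℝ V) / 2)
            ∂(volume : Measure V).toSphere := by
  set m := Module.finrank ℝ V with hm
  have m_pos : 1 ≤ m := Module.finrank_pos
  have m_cast : ((m - 1 : ℕ) : ℝ) = m - 1 := by rw [Nat.cast_sub m_pos, Nat.cast_one]
  rw [lintegral_polar (by fun_prop), ← lintegral_const_mul _ (by fun_prop), ← hm]
  refine lintegral_congr fun w => ?_
  have integrand_eq : ∀ r ∈ Set.Ioi (0 : ℝ),
      ENNReal.ofReal (r ^ (m - 1)) * (ENNReal.ofReal (exp (-‖r • (w : V)‖ ^ 2)) *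
        (ENNReal.ofReal |inner ℝ v (r • (w : V))| ^ μ *
          ENNReal.ofReal (exp (inner ℝ v (r • (w : V)) ^ 2)))) =
      ENNReal.ofReal |inner ℝ v w| ^ μ * (ENNReal.ofReal r ^ (m - 1 + μ) *
        ENNReal.ofReal (exp (-(1 - inner ℝ v w ^ 2) * r ^ 2))) := fun r (hr : 0 < r) => by
    have r_pos : ENNReal.ofReal r ≠ 0 := by simpa using hr
    rw [norm_smul, norm_eq_of_mem_sphere, mul_one, norm_eq_abs, sq_abs, inner_smul_right,
      mul_comm r, exp_neg_sq_mul_abs_rpow_mul_exp_sq, abs_of_pos hr, ENNReal.ofReal_pow hr.le,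
      ENNReal.rpow_add _ _ r_pos ENNReal.ofReal_ne_top, ← m_cast, ENNReal.rpow_natCast]
    ring
  have exponent_gt : -1 < (m - 1 + μ : ℝ) := by
    rw [← m_cast]
    linarith [(m - 1).cast_nonneg (α := ℝ)]
  rw [setLIntegral_congr_fun measurableSet_Ioi integrand_eq, lintegral_const_mul _ (by fun_prop),
    lintegral_Ioi_rpow_mul_exp_neg_mul_sq exponent_gt,
    show (m - 1 + μ + 1 : ℝ) = μ + m by ring]
  ring

lemma lintegral_exp_inner_sq_eq_Gamma [Nontrivial V] {μ : ℝ} (hμ : -1 < μ) (v : V) :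
    ∫⁻ x : V, ENNReal.ofReal (exp (-‖x‖ ^ 2)) *
        (ENNReal.ofReal |inner ℝ v x| ^ μ * ENNReal.ofReal (exp (inner ℝ v x ^ 2))) =
      ENNReal.ofReal √π ^ (Module.finrank ℝ V - 1) * (ENNReal.ofReal (Gamma ((μ + 1) / 2)) *
        (ENNReal.ofReal ‖v‖ ^ μ * ENNReal.ofReal (1 - ‖v‖ ^ 2) ^ (-(μ + 1) / 2))) := by
  rw [lintegral_exp_neg_norm_sq_mul_inner v
    (g := fun t => ENNReal.ofReal |t| ^ μ * ENNReal.ofReal (exp (t ^ 2))) (by fun_prop)]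
  simp only [exp_neg_sq_mul_abs_rpow_mul_exp_sq, abs_norm]
  rw [lintegral_const_mul _ (by fun_prop), lintegral_abs_rpow_mul_exp_neg_mul_sq hμ]
  ring

variable (V) in
lemma Gamma_mul_toSphere_univ [Nontrivial V] :
    ENNReal.ofReal (Gamma (Module.finrank ℝ V / 2) / 2) * (volume : Measure V).toSphere Set.univ =
      ENNReal.ofReal √π ^ (Module.finrank ℝ V - 1) * ENNReal.ofReal (Gamma (1 / 2)) := by
  have h := lintegral_exp_inner_sq_eq_lintegral_sphere neg_one_lt_zero (0 : V)
  rw [lintegral_exp_inner_sq_eq_Gamma neg_one_lt_zero] at h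
  simpa using h.symm

lemma Gamma_mul_lintegral_unitSphereMeasure [Nontrivial V] {μ : ℝ} (hμ : -1 < μ) (v : V) :
    ENNReal.ofReal (Gamma (1 / 2)) * ENNReal.ofReal (Gamma ((μ + Module.finrank ℝ V) / 2) / 2) *
        ∫⁻ w : sphere (0 : V) 1, ENNReal.ofReal |inner ℝ v w| ^ μ *
          ENNReal.ofReal (1 - inner ℝ v w ^ 2) ^ (-(μ + Module.finrank ℝ V) / 2)
            ∂unitSphereMeasure V =
      ENNReal.ofReal (Gamma (Module.finrank ℝ V / 2) / 2) * ENNReal.ofReal (Gamma ((μ + 1) / 2)) *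
        (ENNReal.ofReal ‖v‖ ^ μ * ENNReal.ofReal (1 - ‖v‖ ^ 2) ^ (-(μ + 1) / 2)) := by
  have mass_ne_zero : (volume : Measure V).toSphere Set.univ ≠ 0 :=
    Measure.measure_univ_ne_zero.mpr (Measure.toSphere_ne_zero _)
  rw [lintegral_unitSphereMeasure, mul_mul_mul_comm,
    ← lintegral_exp_inner_sq_eq_lintegral_sphere hμ, lintegral_exp_inner_sq_eq_Gamma hμ]
  calc _ = ENNReal.ofReal √π ^ (Module.finrank ℝ V - 1) * ENNReal.ofReal (Gamma (1 / 2)) *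
        ((volume : Measure V).toSphere Set.univ)⁻¹ * (ENNReal.ofReal (Gamma ((μ + 1) / 2)) *
          (ENNReal.ofReal ‖v‖ ^ μ * ENNReal.ofReal (1 - ‖v‖ ^ 2) ^ (-(μ + 1) / 2))) := by ring
    _ = _ := by
      rw [← Gamma_mul_toSphere_univ V,
        ENNReal.mul_inv_cancel_right mass_ne_zero (measure_ne_top _ _), mul_assoc]

lemma lintegral_unitSphereMeasure_abs_inner_rpow [Nontrivial V] {μ : ℝ} (hμ : -1 < μ) (v : V) :
    ∫⁻ w : sphere (0 : V) 1, ENNReal.ofReal |inner ℝ v w| ^ μ *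
        ENNReal.ofReal (1 - inner ℝ v w ^ 2) ^ (-(μ + Module.finrank ℝ V) / 2)
          ∂unitSphereMeasure V =
      ENNReal.ofReal (Gamma (Module.finrank ℝ V / 2) / Gamma (1 / 2) * Gamma ((μ + 1) / 2) /
          Gamma ((μ + Module.finrank ℝ V) / 2)) *
        (ENNReal.ofReal ‖v‖ ^ μ * ENNReal.ofReal (1 - ‖v‖ ^ 2) ^ (-(μ + 1) / 2)) := by
  have h_Gamma := Gamma_mul_lintegral_unitSphereMeasure hμ v
  have m_pos : (1 : ℝ) ≤ Module.finrank ℝ V := by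
    exact_mod_cast Module.finrank_pos (R := ℝ) (M := V)
  have Γ_half_pos : 0 < Gamma (1 / 2) := Gamma_pos_of_pos one_half_pos
  have Γ_finrank_pos : 0 < Gamma (Module.finrank ℝ V / 2) := Gamma_pos_of_pos (by linarith)
  have Γ_pos : 0 < Gamma ((μ + Module.finrank ℝ V) / 2) := Gamma_pos_of_pos (by linarith)
  have factor_pos : 0 < Gamma (1 / 2) * (Gamma ((μ + Module.finrank ℝ V) / 2) / 2) := by positivity
  rw [← ENNReal.ofReal_mul Γ_half_pos.le, ← ENNReal.ofReal_mul (by positivity)] at h_Gamma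
  rw [← ENNReal.mul_right_inj (ENNReal.ofReal_ne_zero_iff.mpr factor_pos) ENNReal.ofReal_ne_top,
    h_Gamma, ← mul_assoc (ENNReal.ofReal (Gamma (1 / 2) * _)),
    ← ENNReal.ofReal_mul factor_pos.le]
  congr 2
  field_simp

end GaussianIntegrals

lemma ofReal_sq_rpow {a : ℝ} (ha : 0 ≤ a) (p : ℝ) :
    ENNReal.ofReal (a ^ 2) ^ (p / 2) = ENNReal.ofReal a ^ p := by
  rw [ENNReal.ofReal_pow ha, ← ENNReal.rpow_natCast, ← ENNReal.rpow_mul, Nat.cast_two,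
    mul_div_cancel₀ _ two_ne_zero]

section WeightedIdentity

variable {V : Type*} [NormedAddCommGroup V] [InnerProductSpace ℝ V] [FiniteDimensional ℝ V]
  [MeasurableSpace V] [BorelSpace V]

lemma funkTransform_abs_inner_rpow (hV : 2 ≤ Module.finrank ℝ V) {μ : ℝ} (hμ : -1 < μ)
    (e θ : sphere (0 : V) 1) :
    funkTransform (fun w => ENNReal.ofReal |inner ℝ (e : V) w| ^ μ *
        ENNReal.ofReal (1 - inner ℝ (e : V) w ^ 2) ^ ((1 - μ - Module.finrank ℝ V) / 2)) θ =
      ENNReal.ofReal (Gamma ((Module.finrank ℝ V - 1) / 2) / Gamma (1 / 2) * Gamma ((μ + 1) / 2) /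
          Gamma ((μ + Module.finrank ℝ V - 1) / 2)) *
        (ENNReal.ofReal (1 - inner ℝ (e : V) θ ^ 2) ^ (μ / 2) *
          ENNReal.ofReal |inner ℝ (e : V) θ| ^ (-1 - μ)) := by
  have h_finrank := finrank_orthogonal_span_unit θ
  have norm_sq_eq := norm_orthogonalProjectionOnto_orthogonal_span_unit_sq e θ
  unfold funkTransform
  set K := (ℝ ∙ (θ : V))ᗮ
  set v := K.orthogonalProjectionOnto (e : V)
  have : Nontrivial K := Module.nontrivial_of_finrank_pos (R := ℝ) (by omega)
  have inner_eq (w : K) : inner ℝ (e : V) w = inner ℝ v w :=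
    (Submodule.inner_orthogonalProjectionOnto_eq_of_mem_right w (e : V)).symm
  have norm_rpow :
      ENNReal.ofReal (1 - inner ℝ (e : V) θ ^ 2) ^ (μ / 2) = ENNReal.ofReal ‖v‖ ^ μ := by
    rw [← norm_sq_eq, ofReal_sq_rpow (norm_nonneg v)]
  have inner_rpow : ENNReal.ofReal |inner ℝ (e : V) θ| ^ (-1 - μ) =
      ENNReal.ofReal (1 - ‖v‖ ^ 2) ^ (-(μ + 1) / 2) := by
    rw [norm_sq_eq, sub_sub_cancel, ← sq_abs, show -(μ + 1) / 2 = (-1 - μ) / 2 by ring,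
      ofReal_sq_rpow (abs_nonneg _)]
  rw [norm_rpow, inner_rpow, ← h_finrank, Nat.cast_add_one, add_sub_cancel_right,
    show (1 - μ - (Module.finrank ℝ K + 1)) / 2 = -(μ + Module.finrank ℝ K) / 2 by ring,
    show μ + (Module.finrank ℝ K + 1) - 1 = μ + Module.finrank ℝ K by ring,
    ← lintegral_unitSphereMeasure_abs_inner_rpow hμ v]
  simp only [sphereAverage, coe_sphereMap, Submodule.coe_subtypeₗᵢ, Submodule.subtype_apply,
    inner_eq]

theorem stmt15_general (hV : 2 ≤ Module.finrank ℝ V) {μ : ℝ} (hμ : -1 < μ)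
    (e : sphere (0 : V) 1) {φ : sphere (0 : V) 1 → ℝ≥0∞} (hφ : Measurable φ) :
    ∫⁻ w, funkTransform φ w * ENNReal.ofReal |inner ℝ (e : V) w| ^ μ *
        ENNReal.ofReal (1 - inner ℝ (e : V) w ^ 2) ^ ((1 - μ - Module.finrank ℝ V) / 2)
          ∂unitSphereMeasure V =
      ENNReal.ofReal (Gamma ((Module.finrank ℝ V - 1) / 2) / Gamma (1 / 2) * Gamma ((μ + 1) / 2) /
          Gamma ((μ + Module.finrank ℝ V - 1) / 2)) *
        ∫⁻ θ, φ θ * ENNReal.ofReal (1 - inner ℝ (e : V) θ ^ 2) ^ (μ / 2) *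
          ENNReal.ofReal |inner ℝ (e : V) θ| ^ (-1 - μ) ∂unitSphereMeasure V := by
  have duality := lintegral_mul_funkTransform_comm hV hφ
    (ψ := fun w => ENNReal.ofReal |inner ℝ (e : V) w| ^ μ *
      ENNReal.ofReal (1 - inner ℝ (e : V) w ^ 2) ^ ((1 - μ - Module.finrank ℝ V) / 2))
    (by fun_prop)
  simp only [funkTransform_abs_inner_rpow hV hμ, mul_comm _ (funkTransform φ _),
    mul_left_comm (φ _) (ENNReal.ofReal (_ / _))] at duality
  rw [lintegral_const_mul _ (by fun_prop)] at duality
  simpa only [← mul_assoc] using duality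

end WeightedIdentity

lemma sphMeasure_eq_unitSphereMeasure (n : ℕ) :
    sphMeasure n = unitSphereMeasure (EuclideanSpace ℝ (Fin n)) := rfl

lemma Funk_eq_funkTransform (n : ℕ) (φ : sphere (0 : EuclideanSpace ℝ (Fin n)) 1 → ℝ≥0∞) :
    Funk n φ = funkTransform φ :=
  funext fun _ => (lintegral_unitSphereMeasure _).symm

/-- The explicit weighted identity (`p = 1` case) for the codimension-one Funk transform:
`∫ Fφ(w) |w_n|^μ (1-w_n²)^{(1-μ-n)/2} d*w = c̃ ∫ φ(θ) (1-θ_n²)^{μ/2} |θ_n|^{-1-μ} d*θ`. -/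
theorem stmt15 (n : ℕ) (hn : 3 ≤ n) (μ : ℝ) (hμ : -1 < μ) (c : ℝ)
    (hc : c = Real.Gamma (((n : ℝ) - 1) / 2) / Real.Gamma (1 / 2) *
      Real.Gamma ((μ + 1) / 2) / Real.Gamma ((μ + (n : ℝ) - 1) / 2))
    (φ : sphere (0 : EuclideanSpace ℝ (Fin n)) 1 → ℝ≥0∞) (hφ : Measurable φ) :
    (∫⁻ w, Funk n φ w *
        ENNReal.ofReal |(w : EuclideanSpace ℝ (Fin n)) ⟨n - 1, by omega⟩| ^ μ *
        ENNReal.ofReal (1 - ((w : EuclideanSpace ℝ (Fin n)) ⟨n - 1, by omega⟩) ^ 2) ^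
          ((1 - μ - (n : ℝ)) / 2) ∂(sphMeasure n)) =
      ENNReal.ofReal c *
        ∫⁻ θ, φ θ *
          ENNReal.ofReal (1 - ((θ : EuclideanSpace ℝ (Fin n)) ⟨n - 1, by omega⟩) ^ 2) ^ (μ / 2) *
          ENNReal.ofReal |(θ : EuclideanSpace ℝ (Fin n)) ⟨n - 1, by omega⟩| ^ (-1 - μ)
          ∂(sphMeasure n) := by
  have h := stmt15_general (V := EuclideanSpace ℝ (Fin n)) (by simpa using by omega) hμ
    ⟨EuclideanSpace.single ⟨n - 1, by omega⟩ 1, by simp⟩ hφ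
  simpa [Funk_eq_funkTransform, sphMeasure_eq_unitSphereMeasure, hc,
    EuclideanSpace.inner_single_left] using h
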